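/- Let L/ℚ₂ be a ramified quadratic extension and let e ∈ ℚ₂* be a non-square such that ℚ₂(√e) is not ℚ₂-isomorphic to L. If −1 ∉ N_{L/ℚ₂}(L*) or e ∉ N_{L/ℚ₂}(L*), then either −e ∉ N_{L/ℚ₂}(L*), or there exists x ∈ ℚ₂* with x ∉ N_{L/ℚ₂}(L*) and x² − e ∉ N_{L/ℚ₂}(L*). -/

import Mathlib

open Module

/-- `normGroup K L` is the set of norms `N_{L/K}(t)` of nonzero elements `t ∈ L`. -/
def normGroup (K L : Type*) [Field K] [Field L] [Algebra K L] : Set K :=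
  {x : K | ∃ t : L, t ≠ 0 ∧ Algebra.norm K t = x}

/-- `v` is the normalized discrete valuation of the `p`-adic field `K`. -/
def IsNormalizedValuation (p : ℕ) [Fact p.Prime] {K : Type*} [Field K] [Algebra ℚ_[p] K]
    (v : K → ℤ) : Prop :=
  (∀ x y : K, x ≠ 0 → y ≠ 0 → v (x * y) = v x + v y) ∧
  (∀ x y : K, x ≠ 0 → y ≠ 0 → x + y ≠ 0 → min (v x) (v y) ≤ v (x + y)) ∧
  (∀ n : ℤ, ∃ x : K, x ≠ 0 ∧ v x = n) ∧
  0 < v (algebraMap ℚ_[p] K (p : ℚ_[p]))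

/-!
Write `L = ℚ₂(√d)` and let `S` be the set of sums of two squares in `ℚ₂`. Suppose `-e` is a norm and
`-1` is not. Then `d ∉ S`, since `d = p² + q²` would make `-q² = p² - d` a norm; as `ℚ₂ = S ∪ -S`,
this gives `-d ∈ S`. Since `de` is not a square, `-de` is a sum of three squares `x² + y² + z²`, and
dividing `-de - z² ∈ S` by `-d ∈ S` gives `d b² + e ∈ S` with `b = z / d`. Hence
`x² - e = -(y² - d b²)` for some `x` and `y`: it is the negative of a norm, so not a norm, and
one of `x` and `-x` is not a norm either.
-/

/-- `a` is a sum of two (possibly zero) squares. In `ℚ₂` these are `0` and the norms from `ℚ₂(√-1)`,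
which are compared with the norms from `L = ℚ₂(√d)`. -/
def IsSumTwoSquares {R : Type*} [Semiring R] (a : R) : Prop :=
  ∃ x y : R, a = x ^ 2 + y ^ 2

namespace IsSumTwoSquares

theorem of_isSquare {R : Type*} [Semiring R] {a : R} (ha : IsSquare a) : IsSumTwoSquares a := by
  obtain ⟨t, rfl⟩ := ha
  exact ⟨t, 0, by rw [pow_two, zero_pow two_ne_zero, add_zero]⟩

theorem mul {R : Type*} [CommRing R] {a b : R} (ha : IsSumTwoSquares a) (hb : IsSumTwoSquares b) :
    IsSumTwoSquares (a * b) := by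
  obtain ⟨x, y, ha⟩ := ha
  obtain ⟨u, v, hb⟩ := hb
  exact sq_add_sq_mul ha hb

theorem div {K : Type*} [Field K] {a b : K} (ha : IsSumTwoSquares a) (hb : IsSumTwoSquares b) :
    IsSumTwoSquares (a / b) := by
  have hab : a / b = a * b * (b⁻¹ * b⁻¹) := by
    rcases eq_or_ne b 0 with rfl | hb0
    · simp
    · field_simp
  exact hab ▸ (ha.mul hb).mul (of_isSquare ⟨b⁻¹, rfl⟩)

theorem of_isSquare_mul_of_mem {K : Type*} [Field K] [CharZero K] {q r : K}
    (hr : r ∈ ({1, 2, 5, 10} : Set K)) (hrq : IsSquare (r * q)) : IsSumTwoSquares q := by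
  have hr0 : r ≠ 0 := by rcases hr with rfl | rfl | rfl | rfl <;> norm_num
  have hr2 : IsSumTwoSquares r := by
    rcases hr with rfl | rfl | rfl | rfl
    exacts [⟨1, 0, by norm_num⟩, ⟨1, 1, by norm_num⟩, ⟨2, 1, by norm_num⟩, ⟨3, 1, by norm_num⟩]
  rw [← mul_div_cancel_left₀ q hr0]
  exact (of_isSquare hrq).div hr2

end IsSumTwoSquares

section NormGroup

variable {K L : Type*} [Field K] [Field L] [Algebra K L]

theorem ne_zero_of_mem_normGroup {x : K} (hx : x ∈ normGroup K L) : x ≠ 0 := by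
  obtain ⟨s, hs, rfl⟩ := hx
  exact ((IsUnit.mk0 s hs).map (Algebra.norm K)).ne_zero

theorem div_mem_normGroup {x y : K} (hx : x ∈ normGroup K L) (hy : y ∈ normGroup K L) :
    x / y ∈ normGroup K L := by
  have hy0 := ne_zero_of_mem_normGroup hy
  obtain ⟨s, hs, rfl⟩ := hx
  obtain ⟨t, ht, rfl⟩ := hy
  exact ⟨s / t, div_ne_zero hs ht, by rw [eq_div_iff hy0, ← map_mul, div_mul_cancel₀ s ht]⟩

theorem neg_notMem_normGroup (h : (-1 : K) ∉ normGroup K L) {x : K} (hx : x ∈ normGroup K L) :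
    -x ∉ normGroup K L := fun hneg => h <| by
  simpa [neg_div, ne_zero_of_mem_normGroup hx] using div_mem_normGroup hneg hx

end NormGroup

section QuadraticExtension

variable {K L : Type*} [Field K] [Field L] [Algebra K L]

theorem linearIndependent_one_of_notMem_range {β : L} (hβ : β ∉ Set.range (algebraMap K L)) :
    LinearIndependent K ![1, β] :=
  (LinearIndependent.pair_iff' one_ne_zero).2 fun a ha =>
    hβ ⟨a, by rw [← ha, Algebra.smul_def, mul_one]⟩

theorem exists_sq_eq_add_mul [Algebra.IsQuadraticExtension K L] {β : L}
    (hβ : β ∉ Set.range (algebraMap K L)) :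
    ∃ p q : K, β ^ 2 = algebraMap K L p + algebraMap K L q * β := by
  have hspan := (linearIndependent_one_of_notMem_range hβ).span_eq_top_of_card_eq_finrank'
    (by simp [Algebra.IsQuadraticExtension.finrank_eq_two K L])
  have hmem : β ^ 2 ∈ Submodule.span K {1, β} := by
    rw [← Matrix.range_cons_cons_empty, hspan]
    trivial
  obtain ⟨p, q, hpq⟩ := Submodule.mem_span_pair.1 hmem
  exact ⟨p, q, by rw [← hpq, Algebra.smul_def, Algebra.smul_def, mul_one]⟩

theorem exists_notMem_range_sq_eq_algebraMap [Algebra.IsQuadraticExtension K L]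
    (h2 : (2 : K) ≠ 0) :
    ∃ (d : K) (α : L), α ∉ Set.range (algebraMap K L) ∧ α ^ 2 = algebraMap K L d := by
  have h2L : algebraMap K L 2 ≠ 0 := by simpa using h2
  obtain ⟨β, hβ⟩ : ∃ β : L, β ∉ Set.range (algebraMap K L) := by
    by_contra! hsurj
    have hone := Subalgebra.bot_eq_top_iff_finrank_eq_one.1
      (Algebra.surjective_algebraMap_iff.1 hsurj).symm
    rw [Algebra.IsQuadraticExtension.finrank_eq_two K L] at hone
    omega
  obtain ⟨p, q, hpq⟩ := exists_sq_eq_add_mul hβ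
  -- The witness comes from completing the square in `β ^ 2 = p + q * β`.
  refine ⟨q ^ 2 + 4 * p, algebraMap K L 2 * β - algebraMap K L q, ?_, ?_⟩
  · rintro ⟨t, ht⟩
    refine hβ ⟨(t + q) / 2, ?_⟩
    rw [map_div₀, div_eq_iff h2L, map_add, ht]
    ring
  · simp only [map_add, map_mul, map_pow, map_ofNat]
    linear_combination 4 * hpq

theorem quadraticAlgebra_lift_injective {d : K} {α : L} (hα : α ∉ Set.range (algebraMap K L))
    (hαd : α * α = d • 1 + (0 : K) • α) :
    Function.Injective (QuadraticAlgebra.lift ⟨α, hαd⟩ : QuadraticAlgebra K d 0 →ₐ[K] L) := by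
  refine (injective_iff_map_eq_zero _).2 fun z hz => ?_
  rw [QuadraticAlgebra.lift_apply_apply] at hz
  have hindep := linearIndependent_one_of_notMem_range hα
  have hcoeff := LinearIndependent.pair_iff.1 hindep z.re z.im hz
  exact QuadraticAlgebra.ext hcoeff.1 hcoeff.2

theorem exists_algEquiv_quadraticAlgebra [Algebra.IsQuadraticExtension K L] (h2 : (2 : K) ≠ 0) :
    ∃ d : K, Nonempty (QuadraticAlgebra K d 0 ≃ₐ[K] L) := by
  obtain ⟨d, α, hα, hαd⟩ := exists_notMem_range_sq_eq_algebraMap (L := L) h2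
  have hroot : α * α = d • 1 + (0 : K) • α := by
    rw [← sq, hαd, Algebra.smul_def, mul_one, zero_smul, add_zero]
  have hfinrank : finrank K (QuadraticAlgebra K d 0) = finrank K L := by
    rw [QuadraticAlgebra.finrank_eq_two, Algebra.IsQuadraticExtension.finrank_eq_two]
  have : FiniteDimensional K L := FiniteDimensional.of_finrank_pos (by
    rw [Algebra.IsQuadraticExtension.finrank_eq_two]; omega)
  have hinj := quadraticAlgebra_lift_injective hα hroot
  have hsurj := (LinearMap.injective_iff_surjective_of_finrank_eq_finrank
    (f := (QuadraticAlgebra.lift ⟨α, hroot⟩).toLinearMap) hfinrank).1 hinj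
  exact ⟨d, ⟨AlgEquiv.ofBijective _ ⟨hinj, hsurj⟩⟩⟩

theorem algebraNorm_quadraticAlgebra {R : Type*} [CommRing R] {a b : R}
    (z : QuadraticAlgebra R a b) : Algebra.norm R z = z.norm :=
  QuadraticAlgebra.det_toLinearMap_eq_norm z

variable {d : K} (f : QuadraticAlgebra K d 0 ≃ₐ[K] L)
include f

theorem isSquare_algebraMap_of_algEquiv_quadraticAlgebra : IsSquare (algebraMap K L d) :=
  ⟨f QuadraticAlgebra.omega, by
    rw [← map_mul, QuadraticAlgebra.omega_mul_omega_eq_algebraMap, map_zero, zero_mul, add_zero,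
      AlgEquiv.commutes]⟩

theorem not_isSquare_of_algEquiv_quadraticAlgebra : ¬ IsSquare d := by
  rintro ⟨r, hr⟩
  have hne (s : K) : f ⟨s, 1⟩ ≠ 0 := by
    rw [Ne, EmbeddingLike.map_eq_zero_iff]
    exact fun h => one_ne_zero (congrArg QuadraticAlgebra.im h)
  refine mul_ne_zero (hne r) (hne (-r)) ?_
  rw [← map_mul, EmbeddingLike.map_eq_zero_iff]
  ext <;> simp [hr]

theorem not_isSquare_mul_of_not_isSquare_algebraMap {e : K} (he : ¬ IsSquare (algebraMap K L e)) :
    ¬ IsSquare (d * e) := fun hde => he <| by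
  have hd0 : d ≠ 0 := fun h =>
    not_isSquare_of_algEquiv_quadraticAlgebra f (h ▸ IsSquare.zero)
  rw [← mul_div_cancel_left₀ e hd0, map_div₀]
  exact (hde.map _).div (isSquare_algebraMap_of_algEquiv_quadraticAlgebra f)

theorem sq_sub_mul_sq_mem_normGroup {a b : K} (hab : a ^ 2 - d * b ^ 2 ≠ 0) :
    a ^ 2 - d * b ^ 2 ∈ normGroup K L := by
  have hnorm : Algebra.norm K (f ⟨a, b⟩) = a ^ 2 - d * b ^ 2 := by
    rw [Algebra.norm_eq_of_algEquiv f, algebraNorm_quadraticAlgebra, QuadraticAlgebra.norm_def]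
    ring
  refine ⟨f ⟨a, b⟩, fun hzero => hab ?_, hnorm⟩
  obtain ⟨rfl, rfl⟩ := QuadraticAlgebra.ext_iff.1 (EmbeddingLike.map_eq_zero_iff.1 hzero)
  simp

theorem not_isSumTwoSquares_of_neg_one_notMem_normGroup (h : (-1 : K) ∉ normGroup K L) :
    ¬ IsSumTwoSquares d := by
  rintro ⟨p, q, hpq⟩
  have hq : q ≠ 0 := by
    rintro rfl
    exact not_isSquare_of_algEquiv_quadraticAlgebra f ⟨p, by rw [hpq]; ring⟩
  have hnegone : (p / q) ^ 2 - d * (1 / q) ^ 2 = -1 := by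
    rw [hpq]
    field_simp
    ring
  rw [← hnegone] at h
  exact h (sq_sub_mul_sq_mem_normGroup f (hnegone ▸ neg_ne_zero.2 one_ne_zero))

theorem exists_notMem_normGroup_sq_sub_notMem {e b : K} (h : (-1 : K) ∉ normGroup K L)
    (he : ¬ IsSquare e) (hneg : -e ∈ normGroup K L) (hb : IsSumTwoSquares (d * b ^ 2 + e)) :
    ∃ x : K, x ≠ 0 ∧ x ∉ normGroup K L ∧ x ^ 2 - e ∉ normGroup K L := by
  obtain ⟨x, y, hxy⟩ := hb
  have hsub : x ^ 2 - e = -(y ^ 2 - d * b ^ 2) := by linear_combination -hxy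
  have hform : y ^ 2 - d * b ^ 2 ≠ 0 := fun hzero =>
    he ⟨x, by linear_combination -hsub + hzero⟩
  have hnot : x ^ 2 - e ∉ normGroup K L :=
    hsub ▸ neg_notMem_normGroup h (sq_sub_mul_sq_mem_normGroup f hform)
  have hx : x ≠ 0 := by
    rintro rfl
    exact hnot (by simpa using hneg)
  by_cases hxN : x ∈ normGroup K L
  · exact ⟨-x, neg_ne_zero.2 hx, neg_notMem_normGroup h hxN, by rwa [neg_sq]⟩
  · exact ⟨x, hx, hxN, hnot⟩

end QuadraticExtension

section TwoAdic

theorem isSquare_of_toZModPow_three_eq_one {u : ℤ_[2]} (hu : PadicInt.toZModPow 3 u = 1) :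
    IsSquare u := by
  have hmem : u - 1 ∈ Ideal.span {((2 : ℕ) : ℤ_[2]) ^ 3} := by
    rw [← PadicInt.ker_toZModPow, RingHom.mem_ker, map_sub, hu, map_one, sub_self]
  have hnorm : ‖1 - u‖ < ‖(2 : ℤ_[2])‖ ^ 2 := by
    have hle := (PadicInt.norm_le_pow_iff_mem_span_pow _ _).2 hmem
    have htwo : ‖(2 : ℤ_[2])‖ = 2⁻¹ := by simpa using PadicInt.norm_p (p := 2)
    rw [norm_sub_rev, htwo]
    exact hle.trans_lt (by norm_num)
  obtain ⟨z, hz, -⟩ := hensels_lemma (p := 2) (R := ℤ_[2])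
    (F := Polynomial.X ^ 2 - Polynomial.C u) (a := 1) (by simpa [one_add_one_eq_two] using hnorm)
  exact ⟨z, by simpa [sub_eq_zero, sq, eq_comm] using hz⟩

theorem isSquare_intCast_mul_of_toZModPow_three_eq_one {n : ℤ} {u : ℤ_[2]}
    (h : n * PadicInt.toZModPow 3 u = 1) : IsSquare ((n : ℚ_[2]) * u) := by
  have hint : IsSquare (n * u) :=
    isSquare_of_toZModPow_three_eq_one (by rwa [map_mul, map_intCast])
  exact_mod_cast hint.map (PadicInt.Coe.ringHom (p := 2))

theorem exists_isSquare_mul_or_neg_of_isUnit {u : ℤ_[2]} (hu : IsUnit u) :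
    ∃ r ∈ ({1, 5} : Set ℚ_[2]), IsSquare (r * u) ∨ IsSquare (-(r * u)) := by
  have hzmod : ∀ w : ZMod (2 ^ 3), IsUnit w → (1 : ℤ) * w = 1 ∨ (-1 : ℤ) * w = 1 ∨
      (5 : ℤ) * w = 1 ∨ (-5 : ℤ) * w = 1 := by decide
  rcases hzmod _ (hu.map (PadicInt.toZModPow 3)) with h | h | h | h
  · exact ⟨1, by simp, .inl (by simpa using isSquare_intCast_mul_of_toZModPow_three_eq_one h)⟩
  · exact ⟨1, by simp, .inr (by simpa using isSquare_intCast_mul_of_toZModPow_three_eq_one h)⟩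
  · exact ⟨5, by simp, .inl (by simpa using isSquare_intCast_mul_of_toZModPow_three_eq_one h)⟩
  · exact ⟨5, by simp, .inr (by simpa using isSquare_intCast_mul_of_toZModPow_three_eq_one h)⟩

theorem exists_isUnit_eq_mul_zpow {p : ℕ} [Fact p.Prime] {q : ℚ_[p]} (hq : q ≠ 0) :
    ∃ u : ℤ_[p], IsUnit u ∧ q = u * (p : ℚ_[p]) ^ q.valuation := by
  have hp : (p : ℚ_[p]) ≠ 0 := by exact_mod_cast (Fact.out : p.Prime).ne_zero
  have hnorm : ‖q * (p : ℚ_[p]) ^ (-q.valuation)‖ = 1 := by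
    rw [norm_mul, Padic.norm_p_zpow, Padic.norm_eq_zpow_neg_valuation hq, neg_neg,
      ← zpow_add₀ (by exact_mod_cast (Fact.out : p.Prime).ne_zero), neg_add_cancel, zpow_zero]
  refine ⟨⟨_, hnorm.le⟩, PadicInt.isUnit_iff.2 hnorm, ?_⟩
  rw [mul_assoc, ← zpow_add₀ hp, neg_add_cancel, zpow_zero, mul_one]

theorem exists_isSquare_mul_or_neg {q : ℚ_[2]} (hq : q ≠ 0) :
    ∃ r ∈ ({1, 2, 5, 10} : Set ℚ_[2]), IsSquare (r * q) ∨ IsSquare (-(r * q)) := by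
  obtain ⟨u, hu, hqu⟩ := exists_isUnit_eq_mul_zpow hq
  obtain ⟨r, hr, hru⟩ := exists_isSquare_mul_or_neg_of_isUnit hu
  have hzpow {k : ℤ} (hk : Even k) : IsSquare ((2 : ℚ_[2]) ^ k) := by
    obtain ⟨m, rfl⟩ := hk
    exact ⟨2 ^ m, zpow_add₀ two_ne_zero m m⟩
  rcases Int.even_or_odd q.valuation with heven | hodd
  · have hrq : r * q = r * u * (2 : ℚ_[2]) ^ q.valuation := by
      rw [mul_assoc]
      exact congrArg (r * ·) hqu
    refine ⟨r, by rcases hr with rfl | rfl <;> simp, ?_⟩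
    rw [hrq, ← neg_mul]
    exact hru.imp (·.mul (hzpow heven)) (·.mul (hzpow heven))
  · have hrq : 2 * r * q = r * u * (2 : ℚ_[2]) ^ (q.valuation + 1) := by
      rw [zpow_add_one₀ two_ne_zero]
      linear_combination 2 * r * hqu
    refine ⟨2 * r, by rcases hr with rfl | rfl <;> norm_num, ?_⟩
    rw [hrq, ← neg_mul]
    exact hru.imp (·.mul (hzpow hodd.add_one)) (·.mul (hzpow hodd.add_one))

theorem isSumTwoSquares_or_isSumTwoSquares_neg (q : ℚ_[2]) :
    IsSumTwoSquares q ∨ IsSumTwoSquares (-q) := by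
  rcases eq_or_ne q 0 with rfl | hq
  · exact .inl (.of_isSquare .zero)
  obtain ⟨r, hr, hrq⟩ := exists_isSquare_mul_or_neg hq
  exact hrq.imp (IsSumTwoSquares.of_isSquare_mul_of_mem hr)
    fun h => IsSumTwoSquares.of_isSquare_mul_of_mem hr (by rwa [mul_neg])

theorem isSumTwoSquares_neg_add_one {r : ℚ_[2]} (hr : r ∈ ({2, 5, 10} : Set ℚ_[2])) :
    IsSumTwoSquares (-(r + 1)) := by
  -- `-7` and `-15` are squares, and `-3 = -7 + 4`, `-6 = -7 + 1`, `-11 = -15 + 4`.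
  obtain ⟨i, hi⟩ := isSquare_intCast_mul_of_toZModPow_three_eq_one (n := -7) (u := 1)
    (by rw [map_one]; decide)
  obtain ⟨j, hj⟩ := isSquare_intCast_mul_of_toZModPow_three_eq_one (n := -15) (u := 1)
    (by rw [map_one]; decide)
  push_cast at hi hj
  rcases hr with rfl | rfl | rfl
  · exact ⟨i, 2, by linear_combination hi⟩
  · exact ⟨i, 1, by linear_combination hi⟩
  · exact ⟨j, 2, by linear_combination hj⟩

theorem exists_isSumTwoSquares_sub_sq_of_not_isSquare_neg {a : ℚ_[2]} (ha : ¬ IsSquare (-a)) :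
    ∃ z : ℚ_[2], IsSumTwoSquares (a - z ^ 2) := by
  have ha0 : a ≠ 0 := by
    rintro rfl
    exact ha (by simp)
  obtain ⟨r, hr, hsq | ⟨t, ht⟩⟩ := exists_isSquare_mul_or_neg ha0
  · exact ⟨0, by simpa using IsSumTwoSquares.of_isSquare_mul_of_mem hr hsq⟩
  have hr' : r ∈ ({2, 5, 10} : Set ℚ_[2]) := by
    refine hr.resolve_left ?_
    rintro rfl
    exact ha ⟨t, by simpa using ht⟩
  have hr0 : r ≠ 0 := by rcases hr' with rfl | rfl | rfl <;> norm_num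
  have hsub : a - (t / r) ^ 2 = -(r + 1) * (t / r * (t / r)) := by
    field_simp
    linear_combination -r * ht
  exact ⟨t / r, hsub ▸ (isSumTwoSquares_neg_add_one hr').mul (.of_isSquare (.mul_self _))⟩

theorem exists_isSumTwoSquares_mul_sq_add {d e : ℚ_[2]} (hd : ¬ IsSumTwoSquares d)
    (hde : ¬ IsSquare (d * e)) : ∃ b : ℚ_[2], IsSumTwoSquares (d * b ^ 2 + e) := by
  have hd0 : d ≠ 0 := by
    rintro rfl
    exact hd (.of_isSquare .zero)
  have hneg : IsSumTwoSquares (-d) := (isSumTwoSquares_or_isSumTwoSquares_neg d).resolve_left hd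
  obtain ⟨z, hz⟩ := exists_isSumTwoSquares_sub_sq_of_not_isSquare_neg (a := -(d * e))
    (by rwa [neg_neg])
  have hquot : (-(d * e) - z ^ 2) / -d = d * (z / d) ^ 2 + e := by
    field_simp
    ring
  exact ⟨z / d, hquot ▸ hz.div hneg⟩

end TwoAdic

theorem stmt_17_general (L : Type*) [Field L] [Algebra ℚ_[2] L]
    [Algebra.IsQuadraticExtension ℚ_[2] L] (e : ℚ_[2])
    (hnotiso : ¬ IsSquare (algebraMap ℚ_[2] L e))
    (h : (-1 : ℚ_[2]) ∉ normGroup ℚ_[2] L ∨ e ∉ normGroup ℚ_[2] L) :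
    -e ∉ normGroup ℚ_[2] L ∨
      ∃ x : ℚ_[2], x ≠ 0 ∧ x ∉ normGroup ℚ_[2] L ∧ x ^ 2 - e ∉ normGroup ℚ_[2] L := by
  refine or_iff_not_imp_left.2 fun hneg => ?_
  rw [not_not] at hneg
  have hnegone : (-1 : ℚ_[2]) ∉ normGroup ℚ_[2] L := fun hmem =>
    h.elim (· hmem) (· (by simpa using div_mem_normGroup hneg hmem))
  obtain ⟨d, ⟨f⟩⟩ := exists_algEquiv_quadraticAlgebra (K := ℚ_[2]) (L := L) two_ne_zero
  obtain ⟨b, hb⟩ := exists_isSumTwoSquares_mul_sq_add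
    (not_isSumTwoSquares_of_neg_one_notMem_normGroup f hnegone)
    (not_isSquare_mul_of_not_isSquare_algebraMap f hnotiso)
  exact exists_notMem_normGroup_sq_sub_notMem f hnegone (fun he => hnotiso (he.map _)) hneg hb

/-- Lemma 6.2: let `L/ℚ₂` be a ramified quadratic extension and `e ∈ ℚ₂*` a non-square
such that `ℚ₂(√e)` is not isomorphic to `L` (i.e. `e` is not a square in `L`). If
`-1 ∉ N_{L/ℚ₂}(L*)` or `e ∉ N_{L/ℚ₂}(L*)`, then either `-e ∉ N_{L/ℚ₂}(L*)`, or there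
exists `x ∈ ℚ₂*` with `x ∉ N_{L/ℚ₂}(L*)` and `x² - e ∉ N_{L/ℚ₂}(L*)`. -/
theorem stmt_17
    (L : Type*) [Field L] [Algebra ℚ_[2] L] (hL2 : finrank ℚ_[2] L = 2)
    (vL : L → ℤ) (hvL : IsNormalizedValuation 2 vL)
    (hram : ∀ x : ℚ_[2], x ≠ 0 → vL (algebraMap ℚ_[2] L x) = 2 * x.valuation)
    (e : ℚ_[2]) (he0 : e ≠ 0) (he : ¬ IsSquare e)
    (hnotiso : ¬ IsSquare (algebraMap ℚ_[2] L e))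
    (h : (-1 : ℚ_[2]) ∉ normGroup ℚ_[2] L ∨ e ∉ normGroup ℚ_[2] L) :
    -e ∉ normGroup ℚ_[2] L ∨
      ∃ x : ℚ_[2], x ≠ 0 ∧ x ∉ normGroup ℚ_[2] L ∧ x ^ 2 - e ∉ normGroup ℚ_[2] L := by
  have : Algebra.IsQuadraticExtension ℚ_[2] L := ⟨hL2⟩
  exact stmt_17_general L e hnotiso h
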